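/- Let T be a stable first-order theory and let M be a countable model of T which is atomic over a subset A ⊆ M. Let b̄ be a finite tuple of M and φ(x̄,ȳ) a formula such that the definable set X = {x̄ ∈ M : M ⊨ φ(x̄,b̄)} contains a nonempty almost A-invariant subset, i.e. a nonempty subset Y ⊆ X having only finitely many images under Aut(M/A). Then the formula φ(x̄,b̄) does not fork over A. -/

import Mathlib

/-!
Forking means dividing here, so the claim is that `φ(x̄, b̄)` does not divide over `A`.

Since `M` is countable and atomic over `A`, a back-and-forth argument shows that tuples with the
same type over `A` are conjugate under `Aut(M/A)` (`exists_aut_of_sameTypeOver`). Let `θ` be a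
formula over `A` isolating `tp(b̄/A)`, and choose a point `y_Z` in each of the finitely many images
`Z` of `Y`. If `b' ∈ M` satisfies `θ`, then `b' = f b̄` for some `f ∈ Aut(M/A)`, so `φ(M, b')`
contains `Z = f(Y)` and in particular `y_Z`. Hence
`M ⊨ ∀ b' (θ(b') → ⋁_Z φ(y_Z, b'))`.
This formula stays true in every elementary extension `N` of `M`. If `(b_i)` is a sequence in `N` of
realizations of `tp(b̄/A)`, then by the pigeonhole principle a single `y_Z` satisfies `φ(x̄, b_i)` for
infinitely many `i`, so no `k` makes the family `φ(x̄, b_i)` `k`-inconsistent.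
-/

open FirstOrder Language

universe u v w

section Core

variable (L : FirstOrder.Language.{u, v})

/-- The tuples `d₁` and `d₂` satisfy the same formulas with parameters from `B`,
i.e. `tp(d₁/B) = tp(d₂/B)`. -/
def SameTypeOver {N : Type w} [L.Structure N] (B : Set N) {n : ℕ}
    (d₁ d₂ : Fin n → N) : Prop :=
  ∀ (m : ℕ) (φ : L.Formula (Fin n ⊕ Fin m)) (a : Fin m → N), (∀ i, a i ∈ B) →
    (φ.Realize (Sum.elim d₁ a) ↔ φ.Realize (Sum.elim d₂ a))

/-- The family of formulas `φ(x̄, seq i)`, `i < ω`, is `k`-inconsistent: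
no `k` formulas of the family are jointly realized in any elementary extension of `N`. -/
def KInconsistent {N : Type w} [L.Structure N] {n m : ℕ}
    (φ : L.Formula (Fin n ⊕ Fin m)) (seq : ℕ → Fin m → N) (k : ℕ) : Prop :=
  ∀ (P : Type w) [L.Structure P], ∀ _g : N ↪ₑ[L] P, ∀ s : Finset ℕ, s.card = k →
    ¬ ∃ x : Fin n → P, ∀ i ∈ s, φ.Realize (Sum.elim x (fun j => _g (seq i j)))

/-- The formula `φ(x̄, b̄)` divides over `A`: there are `k ≥ 1`, an elementary extension
`N` of `M`, and a sequence of tuples of `N` all of the same type as `b̄` over `A`, such that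
the corresponding family of formulas is `k`-inconsistent. -/
def Divides {M : Type w} [L.Structure M] (A : Set M) {n m : ℕ}
    (φ : L.Formula (Fin n ⊕ Fin m)) (b : Fin m → M) : Prop :=
  ∃ k : ℕ, 1 ≤ k ∧
    ∃ (N : Type w) (iN : L.Structure N),
      haveI := iN
      ∃ (g : M ↪ₑ[L] N) (seq : ℕ → Fin m → N),
        (∀ i : ℕ, SameTypeOver L (Set.image (fun x => g x) A) (seq i) (fun j => g (b j))) ∧
        KInconsistent L φ seq k

/-- Following the paper, `φ(x̄,b̄)` forks over `A` if it divides over `A`. -/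
def Forks {M : Type w} [L.Structure M] (A : Set M) {n m : ℕ}
    (φ : L.Formula (Fin n ⊕ Fin m)) (b : Fin m → M) : Prop :=
  Divides L A φ b

/-- The tuple `b̄` is independent from the set `C` over `A` (`b̄ ⫝_A C`):
no formula of `tp(b̄/A ∪ C)` forks over `A`. -/
def IndepOver {M : Type w} [L.Structure M] (A C : Set M) {n : ℕ} (b : Fin n → M) : Prop :=
  ∀ (m : ℕ) (φ : L.Formula (Fin n ⊕ Fin m)) (c : Fin m → M),
    (∀ i, c i ∈ A ∪ C) → φ.Realize (Sum.elim b c) → ¬ Forks L A φ c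

end Core

section Atomic

variable (L : FirstOrder.Language.{u, v})

/-- The complete type of `b` over `A` is isolated: there is a formula over `A` satisfied by
`b` which implies, modulo the theory of `M` with constants for `A`, every formula over `A`
satisfied by `b`. -/
def IsolatedTypeOf {M : Type w} [L.Structure M] (A : Set M) {n : ℕ} (b : Fin n → M) : Prop :=
  ∃ (m : ℕ) (φ : L.Formula (Fin n ⊕ Fin m)) (a : Fin m → M), (∀ i, a i ∈ A) ∧
    φ.Realize (Sum.elim b a) ∧
    ∀ (m' : ℕ) (ψ : L.Formula (Fin n ⊕ Fin m')) (a' : Fin m' → M), (∀ i, a' i ∈ A) →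
      ψ.Realize (Sum.elim b a') →
      ∀ x : Fin n → M, φ.Realize (Sum.elim x a) → ψ.Realize (Sum.elim x a')

/-- `M` is atomic over `A`: every complete type over `A` realized by a finite tuple of `M`
is isolated. -/
def AtomicOver (M : Type w) [L.Structure M] (A : Set M) : Prop :=
  ∀ (n : ℕ) (b : Fin n → M), IsolatedTypeOf L A b

/-- The tuple `b` is algebraic over `A`: some formula with parameters in `A` satisfied by `b`
has only finitely many solutions in `M`. -/
def AlgebraicOver {M : Type w} [L.Structure M] (A : Set M) {n : ℕ} (b : Fin n → M) : Prop :=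
  ∃ (m : ℕ) (φ : L.Formula (Fin n ⊕ Fin m)) (a : Fin m → M), (∀ i, a i ∈ A) ∧
    φ.Realize (Sum.elim b a) ∧ {x : Fin n → M | φ.Realize (Sum.elim x a)}.Finite

/-- The tuple `b` is definable over `A`: some formula with parameters in `A` has `b` as its
unique solution in `M`. -/
def DefinableOver {M : Type w} [L.Structure M] (A : Set M) {n : ℕ} (b : Fin n → M) : Prop :=
  ∃ (m : ℕ) (φ : L.Formula (Fin n ⊕ Fin m)) (a : Fin m → M), (∀ i, a i ∈ A) ∧
    {x : Fin n → M | φ.Realize (Sum.elim x a)} = {b}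

/-- The orbit `{f(b) : f ∈ Aut(M/A)}` of a tuple `b` under the automorphisms of `M`
fixing `A` pointwise. -/
def AutOrbit {M : Type w} [L.Structure M] (A : Set M) {n : ℕ} (b : Fin n → M) :
    Set (Fin n → M) :=
  {x | ∃ f : M ≃[L] M, (∀ y ∈ A, f y = y) ∧ x = fun i => f (b i)}

end Atomic

/-- The theory `T` has the order property: there are a formula `φ(x̄,ȳ)`, a model `M ⊨ T`,
and sequences `(ā_n)`, `(b̄_n)` in `M` with `M ⊨ φ(ā_n, b̄_m)` iff `m < n`. -/
def HasOrderProperty (L : FirstOrder.Language.{u, v}) (T : L.Theory) : Prop :=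
  ∃ (p q : ℕ) (φ : L.Formula (Fin p ⊕ Fin q)) (M : Type w) (iM : L.Structure M),
    haveI := iM
    M ⊨ T ∧ ∃ (a : ℕ → Fin p → M) (b : ℕ → Fin q → M),
      ∀ i j : ℕ, φ.Realize (Sum.elim (a i) (b j)) ↔ j < i

/-! ### Homogeneity of countable atomic models -/

section Homogeneity

variable {L : FirstOrder.Language.{u, v}} {M : Type w} [L.Structure M] {A : Set M}

theorem SameTypeOver.symm {n : ℕ} {x y : Fin n → M} (h : SameTypeOver L A x y) :
    SameTypeOver L A y x :=
  fun m φ a ha => (h m φ a ha).symm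

theorem SameTypeOver.comp {n k : ℕ} {x y : Fin n → M} (h : SameTypeOver L A x y)
    (σ : Fin k → Fin n) : SameTypeOver L A (x ∘ σ) (y ∘ σ) := by
  intro m φ a ha
  have := h m (φ.relabel (Sum.map σ id)) a ha
  simpa only [Formula.realize_relabel, Sum.elim_comp_map, Function.comp_id] using this

/-- An isolating formula for `tp(x/A)` decides the type: its solutions all have the type of `x`. -/
theorem sameTypeOver_of_isolating {n m : ℕ} {x y : Fin n → M} {χ : L.Formula (Fin n ⊕ Fin m)}
    {a : Fin m → M}
    (hχ : ∀ (m' : ℕ) (ψ : L.Formula (Fin n ⊕ Fin m')) (a' : Fin m' → M), (∀ i, a' i ∈ A) →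
      ψ.Realize (Sum.elim x a') →
      ∀ z : Fin n → M, χ.Realize (Sum.elim z a) → ψ.Realize (Sum.elim z a'))
    (hy : χ.Realize (Sum.elim y a)) : SameTypeOver L A x y := by
  intro m' ψ a' ha'
  refine ⟨fun h => hχ m' ψ a' ha' h y hy, fun h => ?_⟩
  by_contra hx
  exact Formula.realize_not.1 (hχ m' ψ.not a' ha' (Formula.realize_not.2 hx) y hy) h

/-- The one-point extension step: over an atomic model, a partial elementary map over `A` with
finite domain can be extended to any further element. -/
theorem SameTypeOver.exists_snoc (hat : AtomicOver L M A) {n : ℕ} {x y : Fin n → M}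
    (h : SameTypeOver L A x y) (c : M) :
    ∃ d : M, SameTypeOver L A (Fin.snoc x c : Fin (n + 1) → M) (Fin.snoc y d) := by
  obtain ⟨m, χ, a, ha, hc, hχ⟩ := hat (n + 1) (Fin.snoc x c)
  let ρ : Fin (n + 1) ⊕ Fin m → (Fin n ⊕ Fin m) ⊕ Fin 1 :=
    Sum.elim (Fin.snoc (fun i => Sum.inl (Sum.inl i)) (Sum.inr 0)) (fun j => Sum.inl (Sum.inr j))
  have key : ∀ (z : Fin n → M) (e : Fin 1 → M),
      Sum.elim (Sum.elim z a) e ∘ ρ = Sum.elim (Fin.snoc z (e 0) : Fin (n + 1) → M) a := by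
    intro z e
    funext i
    rcases i with i | j
    · refine Fin.lastCases ?_ (fun i => ?_) i <;> simp [ρ]
    · simp [ρ]
  have hiff : ∀ z : Fin n → M, ((χ.relabel ρ).iExs (Fin 1)).Realize (Sum.elim z a) ↔
      ∃ e : Fin 1 → M, χ.Realize (Sum.elim (Fin.snoc z (e 0) : Fin (n + 1) → M) a) := by
    intro z
    simp only [Formula.realize_iExs, Formula.realize_relabel, key]
  obtain ⟨e, he⟩ := (hiff y).1 ((h m _ a ha).1 ((hiff x).2 ⟨fun _ => c, hc⟩))
  exact ⟨e 0, sameTypeOver_of_isolating hχ he⟩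

variable (L A) in
/-- A set of pairs is a partial elementary map over `A` when the coordinates of each finite tuple of
its members have the same type over `A`. -/
def IsPartialElementary (S : Set (M × M)) : Prop :=
  ∀ (n : ℕ) (q : Fin n → M × M), (∀ i, q i ∈ S) →
    SameTypeOver L A (fun i => (q i).1) (fun i => (q i).2)

theorem isPartialElementary_range {n : ℕ} {x y : Fin n → M} (h : SameTypeOver L A x y) :
    IsPartialElementary L A (Set.range fun i => (x i, y i)) := by
  intro k q hq
  choose σ hσ using hq
  have := h.comp σ
  simp only [← hσ]
  exact this

theorem IsPartialElementary.mono {S S' : Set (M × M)} (h : IsPartialElementary L A S')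
    (hS : S ⊆ S') : IsPartialElementary L A S :=
  fun n q hq => h n q fun i => hS (hq i)

theorem IsPartialElementary.swap {S : Set (M × M)} (h : IsPartialElementary L A S) :
    IsPartialElementary L A (Prod.swap ⁻¹' S) :=
  fun n q hq => (h n (fun i => (q i).swap) hq).symm

theorem IsPartialElementary.exists_insert (hat : AtomicOver L M A) {S : Set (M × M)}
    (hfin : S.Finite) (h : IsPartialElementary L A S) (c : M) :
    ∃ d : M, IsPartialElementary L A (insert (c, d) S) := by
  obtain ⟨n, q, -, hq⟩ := hfin.fin_param
  obtain ⟨d, hd⟩ := (h n q fun i => hq ▸ Set.mem_range_self i).exists_snoc hat c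
  refine ⟨d, (isPartialElementary_range hd).mono ?_⟩
  rintro z (rfl | hz)
  · exact ⟨Fin.last n, by simp⟩
  · rw [← hq] at hz
    obtain ⟨i, rfl⟩ := hz
    exact ⟨i.castSucc, by simp⟩

theorem IsPartialElementary.exists_insert' (hat : AtomicOver L M A) {S : Set (M × M)}
    (hfin : S.Finite) (h : IsPartialElementary L A S) (d : M) :
    ∃ c : M, IsPartialElementary L A (insert (c, d) S) := by
  obtain ⟨c, hc⟩ := h.swap.exists_insert hat (hfin.preimage Prod.swap_injective.injOn) d
  refine ⟨c, hc.swap.mono ?_⟩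
  rintro z (rfl | hz)
  · exact Or.inl rfl
  · exact Or.inr (by simpa using hz)

/-- A total and surjective partial elementary map over `A` is the graph of an automorphism of `M`
fixing `A` pointwise. -/
theorem IsPartialElementary.exists_aut {U : Set (M × M)} (hU : IsPartialElementary L A U)
    (hdom : ∀ c, ∃ d, (c, d) ∈ U) (hran : ∀ d, ∃ c, (c, d) ∈ U) :
    ∃ f : M ≃[L] M, (∀ y ∈ A, f y = y) ∧ ∀ z ∈ U, f z.1 = z.2 := by
  choose f hf using hdom
  have hfun : ∀ z ∈ U, f z.1 = z.2 := by
    rintro ⟨c, d⟩ hz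
    have := hU 2 ![(c, f c), (c, d)] (by
      intro i; fin_cases i
      · exact hf c
      · exact hz) 0 (Term.equal (Term.var (Sum.inl 0)) (Term.var (Sum.inl 1))) Fin.elim0
        (fun i => i.elim0)
    simpa using this
  have hel : ∀ (n : ℕ) (x : Fin n → M), SameTypeOver L A x (f ∘ x) := fun n x =>
    hU n (fun i => (x i, f (x i))) fun i => hf _
  let g : M ↪ₑ[L] M := ⟨f, by
    intro n ψ x
    have := hel n x 0 (ψ.relabel Sum.inl) Fin.elim0 (fun i => i.elim0)
    simpa only [Formula.realize_relabel, Sum.elim_comp_inl] using this.symm⟩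
  have hsurj : Function.Surjective f := fun d => by
    obtain ⟨c, hc⟩ := hran d
    exact ⟨c, hfun _ hc⟩
  refine ⟨⟨Equiv.ofBijective f ⟨g.injective, hsurj⟩, fun F x => g.map_fun F x,
    fun R x => g.map_rel R x⟩, fun y hy => ?_, hfun⟩
  have := hel 1 (fun _ => y) 1 (Term.equal (Term.var (Sum.inl 0)) (Term.var (Sum.inr 0)))
    (fun _ => y) (fun _ => hy)
  have h2 : f y = y := by simpa using this
  exact h2

/-- A countable model atomic over `A` is homogeneous over `A`: finite tuples with the same type over
`A` are conjugate under `Aut(M/A)`. -/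
theorem exists_aut_of_sameTypeOver [Countable M] (hat : AtomicOver L M A) {n : ℕ}
    {x y : Fin n → M} (h : SameTypeOver L A x y) :
    ∃ f : M ≃[L] M, (∀ z ∈ A, f z = z) ∧ ∀ i, f (x i) = y i := by
  have : Encodable (M ⊕ M) := Encodable.ofCountable _
  let P := {S : Set (M × M) // S.Finite ∧ IsPartialElementary L A S}
  let p₀ : P := ⟨Set.range fun i => (x i, y i), Set.finite_range _, isPartialElementary_range h⟩
  let D : M ⊕ M → Order.Cofinal P := Sum.elim
    (fun c => ⟨{S | ∃ d, (c, d) ∈ S.1}, fun S => by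
      obtain ⟨d, hd⟩ := S.2.2.exists_insert hat S.2.1 c
      exact ⟨⟨_, S.2.1.insert _, hd⟩, ⟨d, Set.mem_insert _ _⟩, Set.subset_insert _ _⟩⟩)
    (fun d => ⟨{S | ∃ c, (c, d) ∈ S.1}, fun S => by
      obtain ⟨c, hc⟩ := S.2.2.exists_insert' hat S.2.1 d
      exact ⟨⟨_, S.2.1.insert _, hc⟩, ⟨c, Set.mem_insert _ _⟩, Set.subset_insert _ _⟩⟩)
  let s : ℕ → P := Order.sequenceOfCofinals p₀ D
  have hmono : Monotone s := Order.sequenceOfCofinals.monotone p₀ D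
  let U : Set (M × M) := ⋃ k, (s k).1
  have hU : IsPartialElementary L A U := by
    intro k q hq
    choose N hN using fun i => Set.mem_iUnion.1 (hq i)
    exact (s (Finset.univ.sup N)).2.2 k q fun i =>
      hmono (Finset.le_sup (Finset.mem_univ i)) (hN i)
  obtain ⟨f, hfA, hf⟩ := hU.exists_aut
    (fun c => by
      obtain ⟨d, hd⟩ := Order.sequenceOfCofinals.encode_mem p₀ D (Sum.inl c)
      exact ⟨d, Set.mem_iUnion.2 ⟨_, hd⟩⟩)
    (fun d => by
      obtain ⟨c, hc⟩ := Order.sequenceOfCofinals.encode_mem p₀ D (Sum.inr d)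
      exact ⟨c, Set.mem_iUnion.2 ⟨_, hc⟩⟩)
  exact ⟨f, hfA, fun i => hf _ (Set.mem_iUnion.2 ⟨0, i, rfl⟩)⟩

end Homogeneity

/-! ### Covering by finitely many points and non-dividing -/

/-- Over an elementary extension `N` of `M`, a covering of the solutions of `θ(ȳ, a)` by finitely
many sets `φ(c_j, ȳ)` persists. -/
theorem cover_transfer {L : FirstOrder.Language.{u, v}} {M N : Type w} [L.Structure M]
    [L.Structure N] (g : M ↪ₑ[L] N) {ι : Type*} [Finite ι] {p m r : ℕ}
    (φ : L.Formula (Fin p ⊕ Fin m)) (θ : L.Formula (Fin m ⊕ Fin r)) (a : Fin r → M)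
    (c : ι → Fin p → M)
    (h : ∀ b : Fin m → M, θ.Realize (Sum.elim b a) → ∃ j, φ.Realize (Sum.elim (c j) b))
    (b : Fin m → N) (hb : θ.Realize (Sum.elim b (g ∘ a))) :
    ∃ j, φ.Realize (Sum.elim (g ∘ c j) b) := by
  let θ' : L.Formula ((Fin r ⊕ ι × Fin p) ⊕ Fin m) :=
    θ.relabel (Sum.elim Sum.inr fun i => Sum.inl (Sum.inl i))
  let φ' : ι → L.Formula ((Fin r ⊕ ι × Fin p) ⊕ Fin m) := fun j =>
    φ.relabel (Sum.elim (fun i => Sum.inl (Sum.inr (j, i))) Sum.inr)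
  have key : ∀ (K : Type w) [L.Structure K] (a : Fin r → K) (c : ι × Fin p → K),
      ((θ'.imp (Formula.iSup φ')).iAlls (Fin m)).Realize (Sum.elim a c) ↔
        ∀ b : Fin m → K, θ.Realize (Sum.elim b a) →
          ∃ j, φ.Realize (Sum.elim (fun i => c (j, i)) b) := by
    intro K _ a c
    rw [Formula.realize_iAlls]
    refine forall_congr' fun b => ?_
    rw [Formula.realize_imp, Formula.realize_iSup]
    simp only [θ', φ', Formula.realize_relabel]
    refine imp_congr (iff_of_eq (congrArg θ.Realize ?_))
      (exists_congr fun j => iff_of_eq (congrArg φ.Realize ?_))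
    · funext i; rcases i with i | i <;> rfl
    · funext i; rcases i with i | i <;> rfl
  have hM := (key M a fun z => c z.1 z.2).2 h
  rw [← g.map_formula, Sum.comp_elim] at hM
  exact (key N _ _).1 hM b hb

/-- Let `T` be a stable theory and let `M` be a countable model of `T` which
is atomic over `A ⊆ M`. Let `b̄` be a finite tuple of `M` and `φ(x̄,ȳ)` a formula such that
the definable set `X = φ(M, b̄)` contains a nonempty subset `Y` having only finitely many
images under `Aut(M/A)`. Then `φ(x̄,b̄)` does not fork over `A`. -/
theorem almost_invariant_subset_implies_nonforking
    (L : FirstOrder.Language.{u, v}) (T : L.Theory)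
    (hstable : ¬ HasOrderProperty.{u, v, w} L T)
    (M : Type w) [L.Structure M] [Countable M] (hMT : M ⊨ T)
    (A : Set M) (hatomic : AtomicOver L M A)
    (p m : ℕ) (φ : L.Formula (Fin p ⊕ Fin m)) (b : Fin m → M)
    (Y : Set (Fin p → M)) (hYne : Y.Nonempty)
    (hYX : Y ⊆ {x | φ.Realize (Sum.elim x b)})
    (hfin : {Z : Set (Fin p → M) | ∃ f : M ≃[L] M, (∀ y ∈ A, f y = y) ∧
        Z = (fun x => fun i => f (x i)) '' Y}.Finite) :
    ¬ Forks L A φ b := by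
  rintro ⟨k, -, N, iN, g, seq, hseq, hinc⟩
  obtain ⟨r, θ, a, ha, hθb, hθ⟩ := hatomic m b
  let 𝒵 : Set (Set (Fin p → M)) := {Z | ∃ f : M ≃[L] M, (∀ y ∈ A, f y = y) ∧
    Z = (fun x => fun i => f (x i)) '' Y}
  have : Finite 𝒵 := hfin
  have hne : ∀ Z : 𝒵, Z.1.Nonempty := by
    rintro ⟨_, f, -, rfl⟩
    exact hYne.image _
  choose c hc using hne
  have hcover : ∀ b' : Fin m → M, θ.Realize (Sum.elim b' a) →
      ∃ Z, φ.Realize (Sum.elim (c Z) b') := by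
    intro b' hb'
    obtain ⟨f, hfA, hfb⟩ :=
      exists_aut_of_sameTypeOver hatomic (sameTypeOver_of_isolating hθ hb')
    let Z : 𝒵 := ⟨_, f, hfA, rfl⟩
    obtain ⟨y, hy, hyc⟩ := hc Z
    refine ⟨Z, ?_⟩
    have h1 : φ.Realize (f ∘ Sum.elim y b) := (StrongHomClass.realize_formula f φ).2 (hYX hy)
    have h2 : f ∘ Sum.elim y b = Sum.elim (c Z) b' := by
      rw [Sum.comp_elim, ← hyc]
      exact congrArg _ (funext hfb)
    rwa [h2] at h1
  have hN : ∀ i, ∃ Z, φ.Realize (Sum.elim (g ∘ c Z) (seq i)) := by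
    intro i
    refine cover_transfer g φ θ a c hcover (seq i) ?_
    refine (hseq i r θ (g ∘ a) fun j => ⟨a j, ha j, rfl⟩).2 ?_
    have h1 := (g.map_formula θ (Sum.elim b a)).2 hθb
    rwa [Sum.comp_elim] at h1
  choose Zi hZi using hN
  obtain ⟨Z, hZ⟩ := Finite.exists_infinite_fiber Zi
  obtain ⟨s, hs, hcard⟩ := (Set.infinite_coe_iff.1 hZ).exists_subset_card_eq k
  refine hinc N (ElementaryEmbedding.refl L N) s hcard ⟨g ∘ c Z, fun i hi => ?_⟩
  have h1 : Zi i = Z := hs hi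
  have h2 := hZi i
  rwa [h1] at h2
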